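/- (Theorem 3.1, part 2.) Let σ > 0. For every global minimizer Z* of the penalized problem (P_β) there exists ε > 0 such that: whenever the exact PBCD sequence {Z^(k)} is started from a point Z^(0) ∈ S^{N−1} with ‖Z^(0) − Z*‖_F < ε, the sequence {Z^(k)} converges to a global minimizer of (P_β). -/

import Mathlib

open Matrix Finset Filter Topology

noncomputable section

/-- Trace inner product `⟨A,B⟩ = Tr(AᵀB)` on `K×K` real matrices. -/
def mip {K : ℕ} (A B : Matrix (Fin K) (Fin K) ℝ) : ℝ := (Aᵀ * B).trace

/-- The section `S = {W : We = 𝟙, WᵀΞϱ = ϱ, Tr W = 0, W ≥ 0}` of the feasible region. -/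
def Sset {K : ℕ} (e ϱ : Fin K → ℝ) : Set (Matrix (Fin K) (Fin K) ℝ) :=
  {W | W.mulVec e = (fun _ => 1) ∧ Wᵀ.mulVec (fun j => e j * ϱ j) = ϱ ∧
    W.trace = 0 ∧ ∀ a b, 0 ≤ W a b}

/-- The discretized repulsive energy
`f(Z) = Σ_i ⟨X_i, ΛΞCΞ⟩ + Σ_{i<j} ⟨X_i, ΞΛX_jΞCΞ⟩` (blocks indexed by `Fin m`, `m = N−1`). -/
def fE {K m : ℕ} (e ϱ : Fin K → ℝ) (C : Matrix (Fin K) (Fin K) ℝ)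
    (Z : Fin m → Matrix (Fin K) (Fin K) ℝ) : ℝ :=
  (∑ i, mip (Z i) (diagonal ϱ * diagonal e * C * diagonal e)) +
    ∑ i, ∑ j ∈ Finset.Ioi i,
      mip (Z i) (diagonal e * diagonal ϱ * Z j * diagonal e * C * diagonal e)

/-- The `ℓ₁`-penalized energy `f_β(Z) = f(Z) + β Σ_{i<j} ⟨X_i, X_j⟩`. -/
def fB {K m : ℕ} (e ϱ : Fin K → ℝ) (C : Matrix (Fin K) (Fin K) ℝ) (β : ℝ)
    (Z : Fin m → Matrix (Fin K) (Fin K) ℝ) : ℝ :=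
  fE e ϱ C Z + β * ∑ i, ∑ j ∈ Finset.Ioi i, mip (Z i) (Z j)

/-- The block gradient
`∇_{X_i} f_β(Z) = ΛΞCΞ + Σ_{j<i} ΛΞX_jΞCΞ + Σ_{j>i} ΞΛX_jΞCΞ + β Σ_{j≠i} X_j`. -/
def gradB {K m : ℕ} (e ϱ : Fin K → ℝ) (C : Matrix (Fin K) (Fin K) ℝ) (β : ℝ)
    (Z : Fin m → Matrix (Fin K) (Fin K) ℝ) (i : Fin m) : Matrix (Fin K) (Fin K) ℝ :=
  diagonal ϱ * diagonal e * C * diagonal e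
    + ∑ j ∈ Finset.Iio i, diagonal ϱ * diagonal e * Z j * diagonal e * C * diagonal e
    + ∑ j ∈ Finset.Ioi i, diagonal e * diagonal ϱ * Z j * diagonal e * C * diagonal e
    + β • ∑ j ∈ Finset.univ.erase i, Z j

/-- `Z* ∈ S^{N−1}` is a KKT point of the penalized problem `(P_β)` if
`⟨∇_{X_i} f_β(Z*), X − X*_i⟩ ≥ 0` for all `X ∈ S` and all blocks `i`. -/
def IsKKT {K m : ℕ} (e ϱ : Fin K → ℝ) (C : Matrix (Fin K) (Fin K) ℝ) (β : ℝ)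
    (Z : Fin m → Matrix (Fin K) (Fin K) ℝ) : Prop :=
  (∀ i, Z i ∈ Sset e ϱ) ∧
    ∀ i, ∀ X ∈ Sset e ϱ, 0 ≤ mip (gradB e ϱ C β Z i) (X - Z i)

/-- The `i`-th block objective of PBCD at outer iterate `Zold` (with the already-updated
blocks taken from `Znew`):
`X ↦ f_β(Znew_{<i}, X, Zold_{>i}) + (σ/2)‖X − Zold_i‖_F²`. -/
def blockObj {K m : ℕ} (e ϱ : Fin K → ℝ) (C : Matrix (Fin K) (Fin K) ℝ) (β σ : ℝ)
    (Zold Znew : Fin m → Matrix (Fin K) (Fin K) ℝ) (i : Fin m)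
    (X : Matrix (Fin K) (Fin K) ℝ) : ℝ :=
  fB e ϱ C β (fun j => if j < i then Znew j else if j = i then X else Zold j)
    + σ / 2 * mip (X - Zold i) (X - Zold i)

/-- `Zseq` is an exact PBCD sequence: for every `k` and every block `i` (in order),
`X_i^{(k+1)}` is the (unique) global solution of the `i`-th block problem. -/
def IsPBCD {K m : ℕ} (e ϱ : Fin K → ℝ) (C : Matrix (Fin K) (Fin K) ℝ) (β σ : ℝ)
    (Zseq : ℕ → Fin m → Matrix (Fin K) (Fin K) ℝ) : Prop :=
  ∀ k i, Zseq (k + 1) i ∈ Sset e ϱ ∧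
    ∀ X ∈ Sset e ϱ,
      blockObj e ϱ C β σ (Zseq k) (Zseq (k + 1)) i (Zseq (k + 1) i) ≤
        blockObj e ϱ C β σ (Zseq k) (Zseq (k + 1)) i X

/-- `Zbar` is the block-optimal sequence of `Zseq`: `X̄_i^{(k+1)}` is the (unique) global
solution of the `i`-th block problem built from the iterates of `Zseq` themselves. -/
def IsBlockOpt {K m : ℕ} (e ϱ : Fin K → ℝ) (C : Matrix (Fin K) (Fin K) ℝ) (β σ : ℝ)
    (Zseq Zbar : ℕ → Fin m → Matrix (Fin K) (Fin K) ℝ) : Prop :=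
  ∀ k i, Zbar (k + 1) i ∈ Sset e ϱ ∧
    ∀ X ∈ Sset e ϱ,
      blockObj e ϱ C β σ (Zseq k) (Zseq (k + 1)) i (Zbar (k + 1) i) ≤
        blockObj e ϱ C β σ (Zseq k) (Zseq (k + 1)) i X

/-- Frobenius norm of a block tuple `Z ∈ (ℝ^{K×K})^m`. -/
def nZ {K m : ℕ} (Z : Fin m → Matrix (Fin K) (Fin K) ℝ) : ℝ :=
  Real.sqrt (∑ i, mip (Z i) (Z i))

section Abstract
variable {E : Type*} [NormedAddCommGroup E] [NormedSpace ℝ E] [FiniteDimensional ℝ E]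

/-- A bilinear form on a finite dimensional space is bounded. -/
lemma pb_bilin_bound (B : E →ₗ[ℝ] E →ₗ[ℝ] ℝ) :
    ∃ M : ℝ, 0 ≤ M ∧ ∀ x y, |B x y| ≤ M * ‖x‖ * ‖y‖ := by
  let B1 : E →ₗ[ℝ] (E →L[ℝ] ℝ) :=
    (LinearMap.toContinuousLinearMap (𝕜 := ℝ) (E := E) (F' := ℝ)).toLinearMap ∘ₗ B
  let B2 : E →L[ℝ] (E →L[ℝ] ℝ) := LinearMap.toContinuousLinearMap B1
  refine ⟨‖B2‖, by positivity, fun x y => ?_⟩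
  have := B2.le_opNorm₂ x y
  simpa [B2, B1] using this

/-- Preimages of controlled norm. -/
lemma pb_preimage {F G : Type*} [NormedAddCommGroup F] [NormedSpace ℝ F] [FiniteDimensional ℝ F]
    [NormedAddCommGroup G] [NormedSpace ℝ G] (L : F →ₗ[ℝ] G) :
    ∃ c : ℝ, 0 < c ∧ ∀ d, ∃ x, L x = L d ∧ ‖x‖ ≤ c * ‖L d‖ := by
  have : CompleteSpace F := FiniteDimensional.complete ℝ F
  have : CompleteSpace (LinearMap.range L) := FiniteDimensional.complete ℝ _
  let L1 : F →L[ℝ] (LinearMap.range L) := LinearMap.toContinuousLinearMap L.rangeRestrict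
  have hs : Function.Surjective L1 := L.surjective_rangeRestrict
  obtain ⟨c, hc, h⟩ := L1.exists_preimage_norm_le hs
  refine ⟨c, hc, fun d => ?_⟩
  obtain ⟨x, hx, hxn⟩ := h (L1 d)
  exact ⟨x, congrArg Subtype.val hx, hxn⟩

/-- Error bound on a single subspace. -/
lemma pb_subspace (V : Submodule ℝ E) (b : E →ₗ[ℝ] ℝ) (B : E →ₗ[ℝ] E →ₗ[ℝ] ℝ)
    (hB : ∀ x y, B x y = B y x) :
    ∃ δ c : ℝ, 0 < δ ∧ 0 ≤ c ∧ ∀ d ∈ V, ∀ (g : E →ₗ[ℝ] ℝ) (η : ℝ), 0 ≤ η →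
      ‖d‖ < δ → η < δ → (∀ v, |g v| ≤ η * ‖v‖) → (∀ v ∈ V, b v + B d v + g v = 0) →
      b d + B d d / 2 ≤ c * η ^ 2 := by
  by_cases hb : ∀ v ∈ V, b v = 0
  · let L0 : V →ₗ[ℝ] (V →L[ℝ] ℝ) :=
      (LinearMap.toContinuousLinearMap (𝕜 := ℝ) (E := V) (F' := ℝ)).toLinearMap ∘ₗ
        (B.domRestrict₁₂ V V)
    have hL0 : ∀ x y : V, L0 x y = B x y := fun x y => rfl
    obtain ⟨c, hc, h⟩ := pb_preimage (F := V) (G := V →L[ℝ] ℝ) L0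
    refine ⟨1, c, one_pos, hc.le, ?_⟩
    intro d hd g η hη _ _ hg hv
    obtain ⟨x, hx', hxn⟩ := h ⟨d, hd⟩
    have hn : ‖L0 ⟨d, hd⟩‖ ≤ η := by
      refine ContinuousLinearMap.opNorm_le_bound _ hη fun v => ?_
      have h1 := hv v v.2
      have h2 := hg v
      rw [hb v v.2] at h1
      rw [hL0, Real.norm_eq_abs]
      have : B d v = - g v := by linarith
      simpa [this] using h2
    have hxn' : ‖x‖ ≤ c * η := hxn.trans (mul_le_mul_of_nonneg_left hn hc.le)
    have e1 : B d d = B d x := by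
      have h1 : L0 x ⟨d, hd⟩ = L0 ⟨d, hd⟩ ⟨d, hd⟩ := by rw [hx']
      rw [hL0, hL0] at h1
      rw [hB d x]; exact h1.symm
    have e2 : |B d x| ≤ η * (c * η) := by
      have h1 := (L0 ⟨d, hd⟩).le_opNorm x
      rw [hL0, Real.norm_eq_abs] at h1
      exact h1.trans (mul_le_mul hn hxn' (norm_nonneg _) hη)
    rw [hb d hd, e1]
    have := le_abs_self (B d x)
    have : 0 ≤ c * η ^ 2 := by positivity
    nlinarith
  · push Not at hb
    obtain ⟨v, hvV, hv⟩ := hb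
    obtain ⟨M, hM, hMB⟩ := pb_bilin_bound B
    have hp : 0 < |b v| := abs_pos.mpr hv
    refine ⟨|b v| / ((M + 1) * (‖v‖ + 1)), 0, by positivity, le_rfl, ?_⟩
    intro d hd g η hη h1 h2 hg h
    exfalso
    have h3 := h v hvV
    have h4 := hMB d v
    have h5 := hg v
    rw [lt_div_iff₀ (by positivity)] at h1 h2
    have h6 : |b v| ≤ |B d v| + |g v| := by
      have : b v = -(B d v) + -(g v) := by linarith
      rw [this]
      refine (abs_add_le _ _).trans ?_
      simp
    have hd0 := norm_nonneg d
    have hv0 := norm_nonneg v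
    set δ := |b v| / ((M + 1) * (‖v‖ + 1)) with hδ
    have hδ' : δ * ((M + 1) * (‖v‖ + 1)) = |b v| := by
      rw [hδ]; field_simp
    have hδ0 : 0 < δ := by positivity
    have h1' : ‖d‖ < δ := by
      rw [← hδ'] at h1; exact lt_of_mul_lt_mul_right h1 (by positivity)
    have h2' : η < δ := by
      rw [← hδ'] at h2; exact lt_of_mul_lt_mul_right h2 (by positivity)
    have : M * ‖d‖ * ‖v‖ ≤ M * δ * ‖v‖ := by gcongr
    have : η * ‖v‖ ≤ δ * ‖v‖ := by gcongr
    have : M * δ * ‖v‖ + δ * ‖v‖ < δ * ((M + 1) * (‖v‖ + 1)) := by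
      have : 0 < δ * (M + 1) := by positivity
      nlinarith
    linarith

/-- Error bound near a point of a polyhedron. -/
lemma pb_error_bound {J : Type*} [Finite J] (P : Set E) (W : Submodule ℝ E) (l : J → E →ₗ[ℝ] ℝ)
    (xs : E) (hP : ∀ z, z ∈ P ↔ z - xs ∈ W ∧ ∀ j, 0 ≤ l j z)
    (b : E →ₗ[ℝ] ℝ) (B : E →ₗ[ℝ] E →ₗ[ℝ] ℝ) (hB : ∀ x y, B x y = B y x) :
    ∃ δ c : ℝ, 0 < δ ∧ 0 < c ∧ ∀ x ∈ P, ∀ (g : E →ₗ[ℝ] ℝ) (η : ℝ), 0 ≤ η →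
      ‖x - xs‖ < δ → η < δ → (∀ v, |g v| ≤ η * ‖v‖) →
      (∀ y ∈ P, 0 ≤ b (y - x) + B (x - xs) (y - x) + g (y - x)) →
      b (x - xs) + B (x - xs) (x - xs) / 2 ≤ c * η ^ 2 := by
  classical
  let V : Set J → Submodule ℝ E := fun A => W ⊓ ⨅ j ∈ A, LinearMap.ker (l j)
  have hV : ∀ A v, v ∈ V A ↔ v ∈ W ∧ ∀ j ∈ A, l j v = 0 := by
    intro A v; simp [V, Submodule.mem_inf, Submodule.mem_iInf]
  choose δ c hδ hc h using fun A => pb_subspace (V A) b B hB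
  have hev : ∀ᶠ x in 𝓝 xs, ∀ j, l j xs ≠ 0 → l j x ≠ 0 := by
    rw [Filter.eventually_all]
    intro j
    by_cases hj : l j xs = 0
    · simp [hj]
    · have hcont : Continuous (l j) := (l j).continuous_of_finiteDimensional
      filter_upwards [hcont.continuousAt.eventually_ne hj] with x hx _ using hx
  have hev2 : ∀ᶠ t : ℝ in 𝓝[>] 0, ∀ A, t ≤ δ A := by
    rw [Filter.eventually_all]
    intro A
    filter_upwards [Ioc_mem_nhdsGT (hδ A)] with t ht using ht.2
  obtain ⟨r, hr, hr'⟩ := Metric.eventually_nhds_iff.mp hev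
  obtain ⟨t, ht, ht0⟩ := (hev2.and self_mem_nhdsWithin).exists
  have ht0 : 0 < t := ht0
  obtain ⟨cM, hcM⟩ := (Set.finite_range c).bddAbove
  refine ⟨min r t, max cM 1, lt_min hr ht0, by positivity, ?_⟩
  intro x hx g η hη h1 h2 hg hy
  let A : Set J := {j | l j x = 0}
  have hxs := hr' (by rw [dist_eq_norm]; exact h1.trans_le (min_le_left _ _))
  have hxP := (hP x).1 hx
  have hd : x - xs ∈ V A := by
    rw [hV]
    refine ⟨hxP.1, fun j hj => ?_⟩
    have hj : l j x = 0 := hj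
    have : l j xs = 0 := by
      by_contra hne; exact hxs j hne hj
    simp [hj, this]
  have key : ∀ v ∈ V A, 0 ≤ b v + B (x - xs) v + g v := by
    intro v hv
    rw [hV] at hv
    have : ∀ᶠ s : ℝ in 𝓝[>] 0, ∀ j, 0 ≤ l j (x + s • v) := by
      rw [Filter.eventually_all]
      intro j
      by_cases hj : l j x = 0
      · have := hv.2 j hj
        simp [hj, this]
      · have hpos : 0 < l j x := lt_of_le_of_ne (hxP.2 j) (Ne.symm hj)
        have hcont : Continuous fun s : ℝ => l j x + s * l j v := by fun_prop
        have := (hcont.tendsto 0).eventually_const_lt (u := 0) (by simpa using hpos)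
        filter_upwards [this.filter_mono nhdsWithin_le_nhds] with s hs
        simpa using hs.le
    obtain ⟨s, hs, hs0⟩ := (this.and self_mem_nhdsWithin).exists
    have hs0 : 0 < s := hs0
    have hmem : x + s • v ∈ P := by
      rw [hP]
      refine ⟨?_, hs⟩
      have : x + s • v - xs = (x - xs) + s • v := by abel
      rw [this]
      exact W.add_mem hxP.1 (W.smul_mem _ hv.1)
    have := hy _ hmem
    rw [add_sub_cancel_left] at this
    simp only [map_smul, smul_eq_mul] at this
    have h' : 0 ≤ s * (b v + B (x - xs) v + g v) := by linarith
    exact nonneg_of_mul_nonneg_right h' hs0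
  have key2 : ∀ v ∈ V A, b v + B (x - xs) v + g v = 0 := by
    intro v hv
    have h3 := key v hv
    have h4 := key (-v) ((V A).neg_mem hv)
    simp only [map_neg] at h4
    linarith
  have := h A (x - xs) hd g η hη
    (h1.trans_le ((min_le_right _ _).trans (ht A)))
    (h2.trans_le ((min_le_right _ _).trans (ht A))) hg key2
  refine this.trans ?_
  gcongr
  exact (hcM ⟨A, rfl⟩).trans (le_max_left _ _)

lemma pb_scalar {a c : ℝ} (ha : 0 < a) (hc : 0 < c) :
    ∃ κ : ℝ, 0 < κ ∧ ∀ d D D' : ℝ, 0 ≤ d → 0 ≤ D' → D' + a * d ^ 2 ≤ D → D' ≤ c * d ^ 2 →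
      κ * d ≤ √D - √D' := by
  refine ⟨min 1 (a / (2 * √c + 1)), by positivity, ?_⟩
  intro d D D' hd hD' h1 h2
  set κ := min 1 (a / (2 * √c + 1)) with hκ
  have hκ0 : 0 < κ := by positivity
  have hκ1 : κ ≤ 1 := min_le_left _ _
  have hκ2 : κ * (2 * √c + 1) ≤ a := by
    rw [← le_div_iff₀ (by positivity)]; exact min_le_right _ _
  have hr : √D' ≤ √c * d := by
    rw [Real.sqrt_le_left (by positivity), mul_pow, Real.sq_sqrt hc.le]; exact h2
  have : √D' + κ * d ≤ √D := by
    apply Real.le_sqrt_of_sq_le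
    have e : √D' ^ 2 = D' := Real.sq_sqrt hD'
    have h3 : √D' * (κ * d) ≤ √c * d * (κ * d) := by gcongr
    have h4 : κ * (2 * √c + 1) * d ^ 2 ≤ a * d ^ 2 := by gcongr
    have h5 : κ * κ * d ^ 2 ≤ 1 * κ * d ^ 2 := by gcongr
    nlinarith
  linarith

/-- Abstract local convergence theorem. -/
theorem pb_abstract {J : Type*} [Finite J] (P : Set E) (W : Submodule ℝ E) (l : J → E →ₗ[ℝ] ℝ)
    (xs : E) (hP : ∀ z, z ∈ P ↔ z - xs ∈ W ∧ ∀ j, 0 ≤ l j z)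
    (L : E →ₗ[ℝ] ℝ) (B0 : E →ₗ[ℝ] E →ₗ[ℝ] ℝ) (q : E → ℝ) (hq : ∀ x, q x = L x + B0 x x)
    (hmin : ∀ z ∈ P, q xs ≤ q z) (a : ℝ) (ha : 0 < a) (G : E →ₗ[ℝ] E →ₗ[ℝ] ℝ) :
    ∃ ε : ℝ, 0 < ε ∧ ∀ z : ℕ → E, (∀ k, z k ∈ P) →
      (∀ k, q (z (k + 1)) + a * ‖z (k + 1) - z k‖ ^ 2 ≤ q (z k)) →
      (∀ k, ∀ y ∈ P, 0 ≤ L (y - z (k + 1)) + B0 (z (k + 1)) (y - z (k + 1))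
        + B0 (y - z (k + 1)) (z (k + 1)) + G (z (k + 1) - z k) (y - z (k + 1))) →
      ‖z 0 - xs‖ < ε →
      ∃ zo ∈ P, q zo = q xs ∧ Tendsto z atTop (𝓝 zo) := by
  have hqc : Continuous q := by
    have h1 : Continuous L := L.continuous_of_finiteDimensional
    let B1 : E →ₗ[ℝ] (E →L[ℝ] ℝ) :=
      (LinearMap.toContinuousLinearMap (𝕜 := ℝ) (E := E) (F' := ℝ)).toLinearMap ∘ₗ B0
    have h2 : Continuous B1 := B1.continuous_of_finiteDimensional
    have : q = fun x => L x + B1 x x := funext hq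
    rw [this]
    exact h1.add (h2.clm_apply continuous_id)
  have hPc : IsClosed P := by
    have : P = (fun z => z - xs) ⁻¹' (W : Set E) ∩ ⋂ j, {z | 0 ≤ l j z} := by
      ext z; simp [hP z]
    rw [this]
    refine IsClosed.inter ?_ (isClosed_iInter fun j => ?_)
    · exact (Submodule.closed_of_finiteDimensional W).preimage (by fun_prop)
    · exact isClosed_le continuous_const (l j).continuous_of_finiteDimensional
  let B : E →ₗ[ℝ] E →ₗ[ℝ] ℝ := B0 + B0.flip
  have hBa : ∀ x y, B x y = B0 x y + B0 y x := fun x y => rfl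
  let b : E →ₗ[ℝ] ℝ := L + B xs
  have hba : ∀ x, b x = L x + (B0 xs x + B0 x xs) := fun x => rfl
  obtain ⟨δ, c, hδ, hc, herr⟩ := pb_error_bound P W l xs hP b B
    (fun x y => by rw [hBa, hBa]; ring)
  obtain ⟨M, hM, hG⟩ := pb_bilin_bound G
  obtain ⟨κ, hκ, hscal⟩ := pb_scalar ha (c := c * (M + 1) ^ 2) (by positivity)
  -- choice of the radius
  let δ' := δ / (M + 1) / 2
  have hδ' : 0 < δ' := by positivity
  have hev : ∀ᶠ x in 𝓝 xs, ‖x - xs‖ + √(q x - q xs) / κ < δ / 2 ∧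
      √(q x - q xs) < √a * min δ' (δ / 2) := by
    have c1 : Continuous fun x => ‖x - xs‖ + √(q x - q xs) / κ := by fun_prop
    have c2 : Continuous fun x => √(q x - q xs) := by fun_prop
    have e1 := (c1.tendsto xs).eventually_lt_const (u := δ / 2) (by simpa using by positivity)
    have e2 := (c2.tendsto xs).eventually_lt_const (u := √a * min δ' (δ / 2))
      (by simp only [sub_self, Real.sqrt_zero]; positivity)
    exact e1.and e2
  obtain ⟨ε, hε, hball⟩ := Metric.eventually_nhds_iff.mp hev
  refine ⟨ε, hε, ?_⟩
  intro z hz hdesc hopt h0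
  obtain ⟨hA, hA'⟩ := hball (y := z 0) (by rw [dist_eq_norm]; exact h0)
  have hD0 : ∀ k, 0 ≤ q (z k) - q xs := fun k => sub_nonneg.mpr (hmin _ (hz k))
  have hanti : ∀ k, q (z k) ≤ q (z 0) := by
    intro k
    induction k with
    | zero => exact le_rfl
    | succ k ih =>
      have := hdesc k
      have : 0 ≤ a * ‖z (k + 1) - z k‖ ^ 2 := by positivity
      linarith
  have hsmall : ∀ k, ‖z (k + 1) - z k‖ < min δ' (δ / 2) := by
    intro k
    have h1 : √a * ‖z (k + 1) - z k‖ ≤ √(q (z 0) - q xs) := by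
      apply Real.le_sqrt_of_sq_le
      rw [mul_pow, Real.sq_sqrt ha.le]
      have := hdesc k
      have := hanti k
      have := hD0 (k + 1)
      linarith
    exact lt_of_mul_lt_mul_left (h1.trans_lt hA') (Real.sqrt_nonneg _)
  -- the local estimate
  have hloc : ∀ k, ‖z (k + 1) - xs‖ < δ →
      q (z (k + 1)) - q xs ≤ c * (M + 1) ^ 2 * ‖z (k + 1) - z k‖ ^ 2 := by
    intro k hk
    have hs := (hsmall k).trans_le (min_le_left _ _)
    have hη : (M + 1) * ‖z (k + 1) - z k‖ < δ := by
      have : ‖z (k + 1) - z k‖ * (M + 1) < δ / (M + 1) * (M + 1) := by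
        gcongr
        refine hs.trans ?_
        exact half_lt_self (by positivity)
      rw [div_mul_cancel₀ _ (by positivity)] at this
      linarith
    have := herr (z (k + 1)) (hz _) (G (z (k + 1) - z k)) ((M + 1) * ‖z (k + 1) - z k‖)
      (by positivity) hk hη (fun v => by
        refine (hG _ v).trans ?_
        gcongr
        linarith) (fun y hy => by
        have := hopt k y hy
        rw [hba, hBa]
        simp only [map_sub, LinearMap.sub_apply] at this ⊢
        linarith)
    have e : q (z (k + 1)) - q xs = b (z (k + 1) - xs) + B (z (k + 1) - xs) (z (k + 1) - xs) / 2 := by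
      rw [hba, hBa, hq, hq]
      simp only [map_sub, LinearMap.sub_apply]
      ring
    rw [e]
    refine this.trans (le_of_eq (by ring))
  have hinv : ∀ k, ‖z k - xs‖ + √(q (z k) - q xs) / κ < δ / 2 := by
    intro k
    induction k with
    | zero => exact hA
    | succ k ih =>
      have htri : ‖z (k + 1) - xs‖ ≤ ‖z (k + 1) - z k‖ + ‖z k - xs‖ := norm_sub_le_norm_sub_add_norm_sub _ _ _
      have hs := (hsmall k).trans_le (min_le_right _ _)
      have : 0 ≤ √(q (z k) - q xs) / κ := by positivity
      have hl := hloc k (by linarith)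
      have hsc := hscal _ (q (z k) - q xs) (q (z (k + 1)) - q xs) (norm_nonneg (z (k + 1) - z k))
        (hD0 _) (by have := hdesc k; linarith) hl
      have h3 : ‖z (k + 1) - z k‖ ≤ √(q (z k) - q xs) / κ - √(q (z (k + 1)) - q xs) / κ := by
        rw [← sub_div, le_div_iff₀ hκ]; linarith
      linarith
  have hnear : ∀ k, ‖z k - xs‖ < δ := by
    intro k
    have := hinv k
    have : 0 ≤ √(q (z k) - q xs) / κ := by positivity
    linarith
  have hstep : ∀ k, ‖z (k + 1) - z k‖ ≤ √(q (z k) - q xs) / κ - √(q (z (k + 1)) - q xs) / κ := by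
    intro k
    have hsc := hscal _ (q (z k) - q xs) (q (z (k + 1)) - q xs) (norm_nonneg (z (k + 1) - z k))
        (hD0 _) (by have := hdesc k; linarith) (hloc k (hnear _))
    rw [← sub_div, le_div_iff₀ hκ]; linarith
  have hsum : Summable fun k => ‖z (k + 1) - z k‖ := by
    refine summable_of_sum_range_le (c := √(q (z 0) - q xs) / κ) (fun _ => norm_nonneg _) fun n => ?_
    refine (Finset.sum_le_sum fun k _ => hstep k).trans ?_
    rw [Finset.sum_range_sub']
    have : 0 ≤ √(q (z n) - q xs) / κ := by positivity
    linarith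
  have hcau : CauchySeq z := by
    refine cauchySeq_of_summable_dist ?_
    simpa [dist_eq_norm, norm_sub_rev] using hsum
  have : CompleteSpace E := FiniteDimensional.complete ℝ E
  obtain ⟨zo, hzo⟩ := cauchySeq_tendsto_of_complete hcau
  refine ⟨zo, hPc.mem_of_tendsto hzo (Eventually.of_forall hz), ?_, hzo⟩
  have t1 : Tendsto (fun k => q (z (k + 1)) - q xs) atTop (𝓝 (q zo - q xs)) :=
    (((hqc.tendsto zo).comp hzo).comp (tendsto_add_atTop_nat 1)).sub_const _
  have t2 : Tendsto (fun k => c * (M + 1) ^ 2 * ‖z (k + 1) - z k‖ ^ 2) atTop (𝓝 0) := by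
    simpa using (hsum.tendsto_atTop_zero.pow 2).const_mul (c * (M + 1) ^ 2)
  have t3 : Tendsto (fun k => q (z (k + 1)) - q xs) atTop (𝓝 0) :=
    squeeze_zero (fun k => hD0 _) (fun k => hloc k (hnear _)) t2
  have := tendsto_nhds_unique t1 t3
  linarith

end Abstract

section Concrete
variable {K m : ℕ}

/-- `mip` as a bilinear map. -/
def pbMip (K : ℕ) : Matrix (Fin K) (Fin K) ℝ →ₗ[ℝ] Matrix (Fin K) (Fin K) ℝ →ₗ[ℝ] ℝ :=
  LinearMap.mk₂ ℝ mip
    (by intros; simp [mip, Matrix.add_mul])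
    (by intros; simp [mip])
    (by intros; simp [mip, Matrix.mul_add])
    (by intros; simp [mip])

lemma pbMip_apply (A B : Matrix (Fin K) (Fin K) ℝ) : pbMip K A B = mip A B := rfl

lemma mip_self (A : Matrix (Fin K) (Fin K) ℝ) : mip A A = ∑ b, ∑ a, A a b ^ 2 := by
  simp [mip, Matrix.trace, Matrix.mul_apply, sq]

lemma mip_self_nonneg (A : Matrix (Fin K) (Fin K) ℝ) : 0 ≤ mip A A := by
  rw [mip_self]; positivity

/-- Linear part of `fB`. -/
def pbL (m : ℕ) (e ϱ : Fin K → ℝ) (C : Matrix (Fin K) (Fin K) ℝ) :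
    (Fin m → Matrix (Fin K) (Fin K) ℝ) →ₗ[ℝ] ℝ :=
  ∑ i, (pbMip K).flip (diagonal ϱ * diagonal e * C * diagonal e) ∘ₗ LinearMap.proj i

/-- The linear map `X ↦ A X B`. -/
def pbMul (A B : Matrix (Fin K) (Fin K) ℝ) :
    Matrix (Fin K) (Fin K) ℝ →ₗ[ℝ] Matrix (Fin K) (Fin K) ℝ where
  toFun X := A * X * B
  map_add' := by intros; simp [Matrix.mul_add, Matrix.add_mul]
  map_smul' := by intros; simp

/-- Bilinear part of `fB`. -/
def pbB (m : ℕ) (e ϱ : Fin K → ℝ) (C : Matrix (Fin K) (Fin K) ℝ) (β : ℝ) :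
    (Fin m → Matrix (Fin K) (Fin K) ℝ) →ₗ[ℝ] (Fin m → Matrix (Fin K) (Fin K) ℝ) →ₗ[ℝ] ℝ :=
  ∑ i, ∑ j ∈ Finset.Ioi i,
    ((pbMip K).compl₁₂ (LinearMap.proj i)
      (pbMul (diagonal e * diagonal ϱ) (diagonal e * C * diagonal e) ∘ₗ LinearMap.proj j)
    + β • (pbMip K).compl₁₂ (LinearMap.proj i) (LinearMap.proj j))

lemma fB_eq (e ϱ : Fin K → ℝ) (C : Matrix (Fin K) (Fin K) ℝ) (β : ℝ)
    (Z : Fin m → Matrix (Fin K) (Fin K) ℝ) :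
    fB e ϱ C β Z = pbL m e ϱ C Z + pbB m e ϱ C β Z Z := by
  simp only [fB, fE, pbL, pbB, LinearMap.sum_apply, LinearMap.add_apply, LinearMap.smul_apply,
    LinearMap.compl₁₂_apply, LinearMap.comp_apply, LinearMap.proj_apply, LinearMap.flip_apply,
    pbMip_apply, Finset.sum_add_distrib, Finset.mul_sum, smul_eq_mul, add_assoc, pbMul,
    LinearMap.coe_mk, AddHom.coe_mk, Matrix.mul_assoc]

/-- The truncation `w ↦ (w_j)_{j > i}`. -/
def pbT (i : Fin m) :
    (Fin m → Matrix (Fin K) (Fin K) ℝ) →ₗ[ℝ] (Fin m → Matrix (Fin K) (Fin K) ℝ) where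
  toFun w := fun j => if i < j then w j else 0
  map_add' := by intro x y; ext j a b; simp only [Pi.add_apply]; split_ifs <;> simp
  map_smul' := by
    intro c x; ext j a b; simp only [Pi.smul_apply, RingHom.id_apply]; split_ifs <;> simp

/-- Extraction of the `i`-th block, extended by zero. -/
def pbS (i : Fin m) :
    (Fin m → Matrix (Fin K) (Fin K) ℝ) →ₗ[ℝ] (Fin m → Matrix (Fin K) (Fin K) ℝ) :=
  LinearMap.single ℝ (fun _ : Fin m => Matrix (Fin K) (Fin K) ℝ) i ∘ₗ LinearMap.proj i

lemma pbS_apply (i : Fin m) (v : Fin m → Matrix (Fin K) (Fin K) ℝ) :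
    pbS i v = Pi.single i (v i) := rfl

lemma pbS_sum (F : (Fin m → Matrix (Fin K) (Fin K) ℝ) →ₗ[ℝ] ℝ)
    (v : Fin m → Matrix (Fin K) (Fin K) ℝ) : F v = ∑ i, F (pbS i v) := by
  rw [← map_sum]
  simp only [pbS_apply, Finset.univ_sum_single]

/-- The bilinear map giving the residual of the optimality conditions. -/
def pbG (m : ℕ) (e ϱ : Fin K → ℝ) (C : Matrix (Fin K) (Fin K) ℝ) (β σ : ℝ) :
    (Fin m → Matrix (Fin K) (Fin K) ℝ) →ₗ[ℝ] (Fin m → Matrix (Fin K) (Fin K) ℝ) →ₗ[ℝ] ℝ :=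
  ∑ i, (-((pbB m e ϱ C β + (pbB m e ϱ C β).flip).compl₁₂ (pbT i) (pbS i))
    + σ • (pbMip K).compl₁₂ (LinearMap.proj i) (LinearMap.proj i))

lemma pbG_apply (e ϱ : Fin K → ℝ) (C : Matrix (Fin K) (Fin K) ℝ) (β σ : ℝ)
    (w v : Fin m → Matrix (Fin K) (Fin K) ℝ) :
    pbG m e ϱ C β σ w v = ∑ i, (-(pbB m e ϱ C β (pbT i w) (pbS i v)
      + pbB m e ϱ C β (pbS i v) (pbT i w)) + σ * mip (w i) (v i)) := by
  simp only [pbG, LinearMap.sum_apply, LinearMap.add_apply, LinearMap.smul_apply,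
    LinearMap.neg_apply, LinearMap.compl₁₂_apply, LinearMap.proj_apply, LinearMap.flip_apply,
    pbMip_apply, smul_eq_mul]

/-- Directions of the affine hull of `S^m`. -/
def pbW (m : ℕ) (e ϱ : Fin K → ℝ) : Submodule ℝ (Fin m → Matrix (Fin K) (Fin K) ℝ) where
  carrier := {Z | ∀ i, (Z i).mulVec e = 0 ∧ (Z i)ᵀ.mulVec (fun j => e j * ϱ j) = 0 ∧
    (Z i).trace = 0}
  add_mem' := by
    intro x y hx hy i
    obtain ⟨h1, h2, h3⟩ := hx i
    obtain ⟨h4, h5, h6⟩ := hy i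
    simp [Matrix.add_mulVec, h1, h2, h3, h4, h5, h6]
  zero_mem' := by intro i; simp
  smul_mem' := by
    intro c x hx i
    obtain ⟨h1, h2, h3⟩ := hx i
    simp [Matrix.smul_mulVec, h1, h2, h3]

lemma mem_S_iff (e ϱ : Fin K → ℝ) (Zs : Fin m → Matrix (Fin K) (Fin K) ℝ)
    (hZs : ∀ i, Zs i ∈ Sset e ϱ) (Z : Fin m → Matrix (Fin K) (Fin K) ℝ) :
    (∀ i, Z i ∈ Sset e ϱ) ↔ Z - Zs ∈ pbW m e ϱ ∧ ∀ i a b, 0 ≤ Z i a b := by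
  constructor
  · intro h
    refine ⟨fun i => ?_, fun i => (h i).2.2.2⟩
    obtain ⟨h1, h2, h3, -⟩ := h i
    obtain ⟨h4, h5, h6, -⟩ := hZs i
    simp [Matrix.sub_mulVec, h1, h2, h3, h4, h5, h6]
  · rintro ⟨h, h'⟩ i
    obtain ⟨h1, h2, h3⟩ := h i
    obtain ⟨h4, h5, h6, -⟩ := hZs i
    simp only [Pi.sub_apply, Matrix.sub_mulVec, Matrix.transpose_sub, Matrix.trace_sub,
      sub_eq_zero] at h1 h2 h3
    exact ⟨h1.trans h4, h2.trans h5, h3.trans h6, h' i⟩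

lemma S_convex (e ϱ : Fin K → ℝ) {X Y : Matrix (Fin K) (Fin K) ℝ} (hX : X ∈ Sset e ϱ)
    (hY : Y ∈ Sset e ϱ) {t : ℝ} (ht : 0 ≤ t) (ht1 : t ≤ 1) : X + t • (Y - X) ∈ Sset e ϱ := by
  obtain ⟨h1, h2, h3, h7⟩ := hX
  obtain ⟨h4, h5, h6, h8⟩ := hY
  refine ⟨?_, ?_, ?_, ?_⟩
  · simp [Matrix.add_mulVec, Matrix.smul_mulVec, Matrix.sub_mulVec, h1, h4]
  · simp [Matrix.add_mulVec, Matrix.smul_mulVec, Matrix.sub_mulVec, h2, h5]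
  · simp [h3, h6]
  · intro a b
    have e1 := mul_nonneg (sub_nonneg.mpr ht1) (h7 a b)
    have e2 := mul_nonneg ht (h8 a b)
    simp only [Matrix.add_apply, Matrix.smul_apply, Matrix.sub_apply, smul_eq_mul]
    linarith

lemma fo_scalar {α γ : ℝ} (h : ∀ t : ℝ, 0 < t → t ≤ 1 → 0 ≤ t * α + t ^ 2 * γ) : 0 ≤ α := by
  by_contra hα
  push Not at hα
  have hp : 0 < -α / (2 * (|γ| + 1)) := by
    apply div_pos <;> [linarith; positivity]
  set t := min 1 (-α / (2 * (|γ| + 1))) with ht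
  have ht0 : 0 < t := lt_min one_pos hp
  have h1 := h t ht0 (min_le_left _ _)
  have h2 : t * (2 * (|γ| + 1)) ≤ -α := by
    rw [← le_div_iff₀ (by positivity)]; exact min_le_right _ _
  have h3 : 0 ≤ t * (α + t * γ) := by linarith [h1]
  have h4 : 0 ≤ α + t * γ := nonneg_of_mul_nonneg_right h3 ht0
  have h5 : t * γ ≤ t * |γ| := by gcongr; exact le_abs_self _
  nlinarith [abs_nonneg γ]

/-- Descent of a PBCD sweep. -/
lemma pbcd_descent (e ϱ : Fin K → ℝ) (C : Matrix (Fin K) (Fin K) ℝ) (β σ : ℝ)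
    (Z Z' : Fin m → Matrix (Fin K) (Fin K) ℝ) (hZ : ∀ i, Z i ∈ Sset e ϱ)
    (h : ∀ i, ∀ X ∈ Sset e ϱ, blockObj e ϱ C β σ Z Z' i (Z' i) ≤ blockObj e ϱ C β σ Z Z' i X) :
    fB e ϱ C β Z' + σ / 2 * ∑ i, mip ((Z' - Z) i) ((Z' - Z) i) ≤ fB e ϱ C β Z := by
  let U : ℕ → Fin m → Matrix (Fin K) (Fin K) ℝ := fun k j => if (j : ℕ) < k then Z' j else Z j
  have h0 : U 0 = Z := by ext j; simp [U]
  have hm : U m = Z' := by ext j; simp [U]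
  have key : ∀ i : Fin m, σ / 2 * mip ((Z' - Z) i) ((Z' - Z) i) ≤
      fB e ϱ C β (U i) - fB e ϱ C β (U (i + 1)) := by
    intro i
    have hh := h i (Z i) (hZ i)
    have e1 : (fun j => if j < i then Z' j else if j = i then Z' i else Z j) = U (i + 1) := by
      funext j
      simp only [U, Nat.lt_succ_iff]
      rcases lt_trichotomy j i with hj | hj | hj
      · rw [if_pos hj, if_pos (Fin.le_iff_val_le_val.mp hj.le)]
      · subst hj; simp
      · rw [if_neg hj.not_gt, if_neg hj.ne', if_neg (by
          have := Fin.lt_def.mp hj; omega)]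
    have e2 : (fun j => if j < i then Z' j else if j = i then Z i else Z j) = U i := by
      funext j
      simp only [U]
      rcases lt_trichotomy j i with hj | hj | hj
      · rw [if_pos hj, if_pos (Fin.lt_def.mp hj)]
      · subst hj; simp
      · rw [if_neg hj.not_gt, if_neg hj.ne', if_neg (by
          have := Fin.lt_def.mp hj; omega)]
    unfold blockObj at hh
    rw [e1, e2, sub_self] at hh
    have : mip (0 : Matrix (Fin K) (Fin K) ℝ) 0 = 0 := by simp [mip]
    rw [this] at hh
    simp only [Pi.sub_apply]
    linarith
  have hs := Finset.sum_le_sum fun i (_ : i ∈ Finset.univ) => key i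
  rw [← Finset.mul_sum, Fin.sum_univ_eq_sum_range
    (fun k => fB e ϱ C β (U k) - fB e ϱ C β (U (k + 1))), Finset.sum_range_sub', h0, hm] at hs
  linarith

/-- First-order optimality of a PBCD sweep. -/
lemma pbcd_opt (e ϱ : Fin K → ℝ) (C : Matrix (Fin K) (Fin K) ℝ) (β σ : ℝ)
    (Z Z' : Fin m → Matrix (Fin K) (Fin K) ℝ) (hZ' : ∀ i, Z' i ∈ Sset e ϱ)
    (h : ∀ i, ∀ X ∈ Sset e ϱ, blockObj e ϱ C β σ Z Z' i (Z' i) ≤ blockObj e ϱ C β σ Z Z' i X)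
    (Y : Fin m → Matrix (Fin K) (Fin K) ℝ) (hY : ∀ i, Y i ∈ Sset e ϱ) :
    0 ≤ pbL m e ϱ C (Y - Z') + pbB m e ϱ C β Z' (Y - Z') + pbB m e ϱ C β (Y - Z') Z'
      + pbG m e ϱ C β σ (Z' - Z) (Y - Z') := by
  set v := Y - Z' with hv
  have r1 := pbS_sum (pbL m e ϱ C) v
  have r2 := pbS_sum (pbB m e ϱ C β Z') v
  have r3 := pbS_sum ((pbB m e ϱ C β).flip Z') v
  simp only [LinearMap.flip_apply] at r3
  rw [pbG_apply, r1, r2, r3, ← Finset.sum_add_distrib, ← Finset.sum_add_distrib,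
    ← Finset.sum_add_distrib]
  refine Finset.sum_nonneg fun i _ => ?_
  set s := pbS i v with hs
  set T := pbT i (Z' - Z) with hT
  apply fo_scalar (γ := pbB m e ϱ C β s s + σ / 2 * mip (v i) (v i))
  intro t ht ht1
  have hh := h i (Z' i + t • (Y i - Z' i)) (S_convex e ϱ (hZ' i) (hY i) ht.le ht1)
  have e1 : (fun j => if j < i then Z' j else if j = i then Z' i else Z j) = Z' - T := by
    funext j
    simp only [hT, pbT, LinearMap.coe_mk, AddHom.coe_mk, Pi.sub_apply]
    rcases lt_trichotomy j i with hj | hj | hj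
    · rw [if_pos hj, if_neg hj.not_gt, sub_zero]
    · subst hj; simp
    · rw [if_neg hj.not_gt, if_neg hj.ne', if_pos hj, sub_sub_cancel]
  have e2 : (fun j => if j < i then Z' j else if j = i then Z' i + t • (Y i - Z' i) else Z j)
      = Z' - T + t • s := by
    rw [← e1]
    funext j
    simp only [hs, pbS_apply, Pi.add_apply, Pi.smul_apply]
    rcases lt_trichotomy j i with hj | hj | hj
    · simp [hj, hj.ne]
    · subst hj; simp [hv]
    · simp [hj.not_gt, hj.ne']
  unfold blockObj at hh
  rw [e1, e2, fB_eq, fB_eq] at hh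
  have e3 : Z' i + t • (Y i - Z' i) - Z i = (Z' - Z) i + t • v i := by
    simp only [hv, Pi.sub_apply]; abel
  have e4 : mip ((Z' - Z) i + t • v i) ((Z' - Z) i + t • v i) =
      mip (Z' i - Z i) (Z' i - Z i) + 2 * t * mip ((Z' - Z) i) (v i)
        + t ^ 2 * mip (v i) (v i) := by
    have hsym : mip (v i) ((Z' - Z) i) = mip ((Z' - Z) i) (v i) := by
      unfold mip; rw [← Matrix.trace_transpose]; simp
    rw [← pbMip_apply] at hsym ⊢
    simp only [map_add, map_smul, LinearMap.add_apply, LinearMap.smul_apply, smul_eq_mul, hsym,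
      pbMip_apply]
    simp only [Pi.sub_apply]
    ring
  rw [e3, e4] at hh
  simp only [map_add, map_sub, map_smul, LinearMap.add_apply, LinearMap.sub_apply,
    LinearMap.smul_apply, smul_eq_mul] at hh
  linarith

end Concrete

section Final
attribute [local instance] Matrix.normedAddCommGroup Matrix.normedSpace
variable {K m : ℕ}

lemma pb_norm_le (w : Fin m → Matrix (Fin K) (Fin K) ℝ) : ‖w‖ ^ 2 ≤ ∑ i, mip (w i) (w i) := by
  have h0 : 0 ≤ ∑ i, mip (w i) (w i) := Finset.sum_nonneg fun i _ => mip_self_nonneg _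
  have : ‖w‖ ≤ √(∑ i, mip (w i) (w i)) := by
    rw [pi_norm_le_iff_of_nonneg (Real.sqrt_nonneg _)]
    intro i
    rw [Matrix.norm_le_iff (Real.sqrt_nonneg _)]
    intro a b
    rw [Real.norm_eq_abs]
    apply Real.abs_le_sqrt
    calc w i a b ^ 2 ≤ ∑ a, w i a b ^ 2 :=
          Finset.single_le_sum (f := fun a => w i a b ^ 2) (fun _ _ => sq_nonneg _)
            (Finset.mem_univ a)
      _ ≤ ∑ b, ∑ a, w i a b ^ 2 :=
          Finset.single_le_sum (f := fun b => ∑ a, w i a b ^ 2)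
            (fun _ _ => Finset.sum_nonneg fun _ _ => sq_nonneg _) (Finset.mem_univ b)
      _ = mip (w i) (w i) := (mip_self _).symm
      _ ≤ _ := Finset.single_le_sum (f := fun i => mip (w i) (w i))
            (fun _ _ => mip_self_nonneg _) (Finset.mem_univ i)
  calc ‖w‖ ^ 2 ≤ √(∑ i, mip (w i) (w i)) ^ 2 := by gcongr
    _ = _ := Real.sq_sqrt h0

lemma pb_final (e ϱ : Fin K → ℝ) (C : Matrix (Fin K) (Fin K) ℝ) (β σ : ℝ) (hσ : 0 < σ)
    (Zs : Fin m → Matrix (Fin K) (Fin K) ℝ) (hZs : ∀ i, Zs i ∈ Sset e ϱ)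
    (hmin : ∀ Z : Fin m → Matrix (Fin K) (Fin K) ℝ,
        (∀ i, Z i ∈ Sset e ϱ) → fB e ϱ C β Zs ≤ fB e ϱ C β Z) :
    ∃ ε : ℝ, 0 < ε ∧
        ∀ Zseq : ℕ → Fin m → Matrix (Fin K) (Fin K) ℝ,
          IsPBCD e ϱ C β σ Zseq →
          (∀ i, Zseq 0 i ∈ Sset e ϱ) →
          nZ (Zseq 0 - Zs) < ε →
          ∃ Zopt : Fin m → Matrix (Fin K) (Fin K) ℝ,
            (∀ i, Zopt i ∈ Sset e ϱ) ∧ fB e ϱ C β Zopt = fB e ϱ C β Zs ∧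
            Tendsto Zseq atTop (nhds Zopt) := by
  let l : (Fin m × Fin K × Fin K) → (Fin m → Matrix (Fin K) (Fin K) ℝ) →ₗ[ℝ] ℝ := fun j =>
    Matrix.entryLinearMap ℝ ℝ j.2.1 j.2.2 ∘ₗ LinearMap.proj j.1
  obtain ⟨ε, hε, H⟩ := pb_abstract {Z : Fin m → Matrix (Fin K) (Fin K) ℝ | ∀ i, Z i ∈ Sset e ϱ}
    (pbW m e ϱ) l Zs
    (fun z => by
      rw [Set.mem_ofPred_eq, mem_S_iff e ϱ Zs hZs]
      refine and_congr_right fun _ => ⟨fun h j => h j.1 j.2.1 j.2.2, fun h i a b => h (i, a, b)⟩)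
    (pbL m e ϱ C) (pbB m e ϱ C β) (fB e ϱ C β) (fB_eq e ϱ C β) hmin (σ / 2) (by positivity)
    (pbG m e ϱ C β σ)
  refine ⟨ε, hε, fun Zseq hseq h0 hd => ?_⟩
  have hmem : ∀ k i, Zseq k i ∈ Sset e ϱ := by
    intro k
    cases k with
    | zero => exact h0
    | succ k => exact fun i => (hseq k i).1
  obtain ⟨zo, h1, h2, h3⟩ := H Zseq hmem
    (fun k => by
      have h4 := pbcd_descent e ϱ C β σ (Zseq k) (Zseq (k + 1)) (hmem k) (fun i => (hseq k i).2)
      have h5 := mul_le_mul_of_nonneg_left (pb_norm_le (Zseq (k + 1) - Zseq k))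
        (by positivity : 0 ≤ σ / 2)
      linarith)
    (fun k y hy => pbcd_opt e ϱ C β σ (Zseq k) (Zseq (k + 1)) (hmem _)
      (fun i => (hseq k i).2) y hy)
    (lt_of_le_of_lt (Real.le_sqrt_of_sq_le (pb_norm_le _)) hd)
  exact ⟨zo, h1, h2, h3⟩

end Final

/-- Theorem 3.1, part 2.
For `σ > 0` and every global minimizer `Z*` of `(P_β)` there exists `ε > 0` such that every
exact PBCD sequence started at some `Z^{(0)} ∈ S^{N−1}` with `‖Z^{(0)} − Z*‖_F < ε` converges
to a global minimizer of `(P_β)`. -/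
theorem pbcd_exact_local_convergence_to_global_minimizer
    (K N : ℕ) (hK : 1 ≤ K) (hN : 3 ≤ N)
    (e ϱ : Fin K → ℝ) (he : ∀ a, 0 < e a) (hϱ : ∀ a, 0 ≤ ϱ a)
    (C : Matrix (Fin K) (Fin K) ℝ) (hCsym : Cᵀ = C)
    (hC0 : ∀ a b, 0 ≤ C a b) (hCd : ∀ a, C a a = 0)
    (hS : (Sset e ϱ).Nonempty)
    (β σ : ℝ) (hβ : 0 < β) (hσ : 0 < σ) :
    ∀ Zstar : Fin (N - 1) → Matrix (Fin K) (Fin K) ℝ,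
      (∀ i, Zstar i ∈ Sset e ϱ) →
      (∀ Z : Fin (N - 1) → Matrix (Fin K) (Fin K) ℝ,
        (∀ i, Z i ∈ Sset e ϱ) → fB e ϱ C β Zstar ≤ fB e ϱ C β Z) →
      ∃ ε : ℝ, 0 < ε ∧
        ∀ Zseq : ℕ → Fin (N - 1) → Matrix (Fin K) (Fin K) ℝ,
          IsPBCD e ϱ C β σ Zseq →
          (∀ i, Zseq 0 i ∈ Sset e ϱ) →
          nZ (Zseq 0 - Zstar) < ε →
          ∃ Zopt : Fin (N - 1) → Matrix (Fin K) (Fin K) ℝ,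
            (∀ i, Zopt i ∈ Sset e ϱ) ∧
            (∀ Z : Fin (N - 1) → Matrix (Fin K) (Fin K) ℝ,
              (∀ i, Z i ∈ Sset e ϱ) → fB e ϱ C β Zopt ≤ fB e ϱ C β Z) ∧
            Tendsto Zseq atTop (nhds Zopt) := by
  intro Zs hZs hmin
  obtain ⟨ε, hε, H⟩ := pb_final e ϱ C β σ hσ Zs hZs hmin
  refine ⟨ε, hε, fun Zseq h1 h2 h3 => ?_⟩
  obtain ⟨zo, h4, h5, h6⟩ := H Zseq h1 h2 h3
  exact ⟨zo, h4, fun Z hZ => h5 ▸ hmin Z hZ, h6⟩
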